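/- For every quasi-poset P on [n], ehr^str_P(X) = Σ_{~ ◁ P} (μ_{P/~} / cl(~)!) · (Π_{C an equivalence class of ~} (ehr^str_{P|C})'(0)) · X^{cl(~)}, where the sum ranges over all P-compatible equivalence relations ~ on Fin n, (ehr^str_{P|C})'(0) denotes the value at 0 of the derivative of the polynomial ehr^str_{P|C} of the restriction of P to the class C, and μ_{P/~} is the number of heap-orderings of the quasi-poset P/~. -/

import Mathlib

open Polynomial

/-- The quotient quasi-order `≤_{P/~}`: the transitive (here reflexive-transitive)
closure of (`i ≤_P j` or `i ~ j`). -/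
def quotLe {n : ℕ} (le r : Fin n → Fin n → Prop) : Fin n → Fin n → Prop :=
  Relation.ReflTransGen (fun i j => le i j ∨ r i j)

/-- `~ ◁ P`: the equivalence relation `r` is `P`-compatible, i.e. its classes are
`P`-connected and `i ≤_{P/~} j` together with `j ≤_{P/~} i` imply `i ~ j`. -/
def Compat {n : ℕ} (le r : Fin n → Fin n → Prop) : Prop :=
  (∀ x y, r x y →
    Relation.ReflTransGen (fun a b => r a x ∧ r b x ∧ (le a b ∨ le b a)) x y) ∧
  (∀ i j, quotLe le r i j → quotLe le r j i → r i j)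

/-- The number of equivalence classes of a relation. -/
noncomputable def clRel {n : ℕ} (r : Fin n → Fin n → Prop) : ℕ :=
  Nat.card (Quot r)

/-- `cl(Q)` for a quasi-poset `Q`. -/
noncomputable def clQP {n : ℕ} (le : Fin n → Fin n → Prop) : ℕ :=
  clRel (fun i j => le i j ∧ le j i)

/-- `μ_Q`: the number of heap-orderings of the quasi-poset `Q`, i.e. maps
`f : Fin n → Fin (cl Q)` with `i ≤_Q j → f i ≤ f j` and `f i = f j ↔ i ~_Q j`. -/
noncomputable def heapCount {n : ℕ} (le : Fin n → Fin n → Prop) : ℕ :=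
  Nat.card {f : Fin n → Fin (clQP le) //
    (∀ i j, le i j → f i ≤ f j) ∧ (∀ i j, f i = f j ↔ (le i j ∧ le j i))}

/-- Number of elements of `L^str_P(k)`. -/
noncomputable def LstrCount {n : ℕ} (le : Fin n → Fin n → Prop) (k : ℕ) : ℕ :=
  Nat.card {f : Fin n → Fin k //
    (∀ i j, le i j → f i ≤ f j) ∧ (∀ i j, le i j → f i = f j → le j i)}

/-- Number of elements of `L^str(k)` for the restriction of `le` to `B`. -/
noncomputable def LstrCountOn {n : ℕ} (le : Fin n → Fin n → Prop) (B : Set (Fin n))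
    (k : ℕ) : ℕ :=
  Nat.card {f : B → Fin k //
    (∀ i j : B, le i.1 j.1 → f i ≤ f j) ∧
    (∀ i j : B, le i.1 j.1 → f i = f j → le j.1 i.1)}

/-!
A polynomial `p` in one variable is determined by the polynomial `p (x₁ + ⋯ + x_d)` in several, in
which `x₁ ⋯ x_d` has coefficient `d! p_d`. For the strict Ehrhart polynomial `p` of `P`, evaluate
at natural numbers `m₁, …, m_d`: strict maps from `P` to the ordinal sum of chains of lengths
`m₁, …, m_d` are sorted by the isotone map `f : P → {1 < ⋯ < d}` recording the chain in which each
point lands, and those above `f` are families of strict maps from the fibres of `f` to the chains.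
Hence `p (x₁ + ⋯ + x_d) = ∑ f, ∏ c, ehr^str (P|f⁻¹ c) (x_c)`, and `d! p_d` is the sum over `f` of
the products of the linear coefficients of the fibres.

A summand vanishes if a fibre is empty (its polynomial is `1`) or disconnected (its polynomial is a
product of two polynomials without constant term). The remaining `f` have a compatible kernel `~`
with `d` classes, and those with a given kernel `~` are the heap-orderings of `P/~`.
-/

section StrictMaps

variable {α' β' α β ι : Type*}

/-- The order-preserving maps out of an arbitrary relation `r`: the set `L_P(k)` of the paper is
`IsotoneMap P (Fin k)`. -/
abbrev IsotoneMap (r : α → α → Prop) (β : Type*) [LE β] : Type _ :=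
  r →r ((· ≤ ·) : β → β → Prop)

noncomputable instance IsotoneMap.fintype [Finite α] [Finite β] [LE β] (r : α → α → Prop) :
    Fintype (IsotoneMap r β) :=
  have := DFunLike.finite (IsotoneMap r β)
  Fintype.ofFinite _

/-- The strict order-preserving maps out of an arbitrary relation `r`: the set `L^str_P(k)` of the
paper is `StrictMap P (Fin k)`. -/
abbrev StrictMap (r : α → α → Prop) (β : Type*) [LE β] : Type _ :=
  {f : α → β // (∀ i j, r i j → f i ≤ f j) ∧ ∀ i j, r i j → f i = f j → r j i}

namespace StrictMap

variable {r : α → α → Prop} {s : α' → α' → Prop}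

def congr [LE β] [LE β'] (e : r ≃r s) (e' : β ≃o β') : StrictMap r β ≃ StrictMap s β' :=
  (e.toEquiv.arrowCongr e'.toEquiv).subtypeEquiv fun f ↦ by
    have symm_apply (i : α) : e.toEquiv.symm (e i) = i := e.toEquiv.symm_apply_apply i
    simp [e.surjective.forall, e.map_rel_iff, symm_apply]

def sumEquiv [LE β] : StrictMap (Sum.LiftRel r s) β ≃ StrictMap r β × StrictMap s β :=
  ((Equiv.sumArrowEquivProdArrow α α' β).subtypeEquiv fun f ↦ by
    simp [Sum.forall, and_and_and_comm]).trans Equiv.subtypeProdEquivProd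

section Glue

section LE

variable [LE β] [LE ι] {π : β → ι} {f : IsotoneMap r ι}

/-- The map `α → β` over `f : α → ι` obtained by putting together strict maps between the fibres of
`f` and those of `π : β → ι`. -/
def glue (g : ∀ c, StrictMap (Subrel r (· ∈ f ⁻¹' {c})) (π ⁻¹' {c})) (i : α) : β :=
  (g (f i)).1 ⟨i, rfl⟩

variable (g : ∀ c, StrictMap (Subrel r (· ∈ f ⁻¹' {c})) (π ⁻¹' {c})) {i j : α}

theorem glue_eq_of_apply_eq {c : ι} (hi : f i = c) : glue g i = (g c).1 ⟨i, hi⟩ := by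
  subst hi
  rfl

theorem apply_glue (i : α) : π (glue g i) = f i :=
  ((g (f i)).1 ⟨i, rfl⟩).2

theorem rel_of_glue_eq_glue (hij : r i j) (h : glue g i = glue g j) : r j i := by
  have heq : f i = f j := by rw [← apply_glue g, h, apply_glue g]
  rw [glue_eq_of_apply_eq g heq] at h
  exact (g (f j)).2.2 ⟨i, heq⟩ ⟨j, rfl⟩ hij (Subtype.ext h)

end LE

variable [LinearOrder β] [PartialOrder ι] {π : β → ι} {f : IsotoneMap r ι}
  (g : ∀ c, StrictMap (Subrel r (· ∈ f ⁻¹' {c})) (π ⁻¹' {c})) {i j : α}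

theorem glue_lt_glue_of_lt (hπ : Monotone π) (hij : f i < f j) : glue g i < glue g j :=
  hπ.reflect_lt (by rwa [apply_glue g, apply_glue g])

theorem glue_le_glue (hπ : Monotone π) (hij : r i j) : glue g i ≤ glue g j := by
  rcases (f.map_rel hij).lt_or_eq with hlt | heq
  · exact (glue_lt_glue_of_lt g hπ hlt).le
  · rw [glue_eq_of_apply_eq g heq]
    exact (g (f j)).2.1 ⟨i, heq⟩ ⟨j, rfl⟩ hij

/-- Strict maps over `f` amount to families of strict maps between the fibres: points of distinct
fibres of `f` impose no further condition since `π` is monotone. -/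
def fibreEquiv (hπ : Monotone π) (f : IsotoneMap r ι) :
    {h : StrictMap r β // π ∘ h.1 = f} ≃
      ∀ c, StrictMap (Subrel r (· ∈ f ⁻¹' {c})) (π ⁻¹' {c}) where
  toFun h c := ⟨fun i ↦ ⟨h.1.1 i, (congrFun h.2 i).trans i.2⟩,
    fun i j hij ↦ h.1.2.1 i j hij,
    fun i j hij heq ↦ h.1.2.2 i j hij (congrArg Subtype.val heq)⟩
  invFun g := ⟨⟨glue g, fun _ _ ↦ glue_le_glue g hπ, fun _ _ ↦ rel_of_glue_eq_glue g⟩,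
    funext (apply_glue g)⟩
  left_inv _ := rfl
  right_inv g := by
    ext c ⟨i, hi⟩
    exact glue_eq_of_apply_eq g hi

/-- Sorts the strict maps `h` by the isotone map `π ∘ h`. -/
def sigmaFibreEquiv (hπ : Monotone π) :
    StrictMap r β ≃
      Σ f : IsotoneMap r ι, ∀ c, StrictMap (Subrel r (· ∈ f ⁻¹' {c})) (π ⁻¹' {c}) :=
  (Equiv.sigmaFiberEquiv fun h : StrictMap r β ↦
      (⟨π ∘ h.1, fun hij ↦ hπ (h.2.1 _ _ hij)⟩ : IsotoneMap r ι)).symm.trans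
    (Equiv.sigmaCongrRight fun f ↦
      (Equiv.subtypeEquivRight fun _ ↦ DFunLike.coe_injective.eq_iff.symm).trans (fibreEquiv hπ f))

end Glue

end StrictMap

theorem card_strictMap_eq_sum_prod [Finite α] [Fintype ι] [PartialOrder ι] [LinearOrder β]
    [Finite β] (r : α → α → Prop) {π : β → ι} (hπ : Monotone π) :
    Nat.card (StrictMap r β) = ∑ f : IsotoneMap r ι,
      ∏ c, Nat.card (StrictMap (Subrel r (· ∈ f ⁻¹' {c})) (π ⁻¹' {c})) := by
  rw [Nat.card_congr (StrictMap.sigmaFibreEquiv hπ), Nat.card_sigma]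
  simp_rw [Nat.card_pi]

end StrictMaps

section Coeff

variable {R ι : Type*} [CommSemiring R]

theorem eval_zero_derivative (p : R[X]) : (derivative p).eval 0 = p.coeff 1 := by
  simp [← coeff_zero_eq_eval_zero, coeff_derivative]

theorem mvPolynomial_eval_aeval (x : ι → R) (q : MvPolynomial ι R) (p : R[X]) :
    MvPolynomial.eval x (aeval q p) = p.eval (MvPolynomial.eval x q) := by
  simpa only [MvPolynomial.aeval_eq_eval, coe_aeval_eq_eval] using
    (aeval_algHom_apply (MvPolynomial.aeval x) q p).symm

variable [Fintype ι]

theorem coeff_aeval_sum_X (p : R[X]) (m : ι →₀ ℕ) :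
    (aeval (∑ c : ι, MvPolynomial.X c : MvPolynomial ι R) p).coeff m =
      p.coeff m.degree * m.multinomial := by
  induction p using Polynomial.induction_on' with
  | add p q hp hq => simp [hp, hq, add_mul]
  | monomial k a =>
    rw [← C_mul_X_pow_eq_monomial, map_mul, aeval_C, map_pow, aeval_X,
      MvPolynomial.algebraMap_eq, MvPolynomial.coeff_C_mul,
      MvPolynomial.coeff_sum_X_pow_of_fintype, coeff_C_mul_X_pow]
    simp [Finsupp.degree_eq_sum, Finsupp.sum_fintype]

theorem coeff_prod_aeval_X (q : ι → R[X]) (m : ι →₀ ℕ) :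
    (∏ c, aeval (MvPolynomial.X c : MvPolynomial ι R) (q c)).coeff m = ∏ c, (q c).coeff (m c) := by
  classical
  simp only [aeval_eq_sum_range, Finset.prod_univ_sum, MvPolynomial.coeff_sum, Finset.prod_smul,
    MvPolynomial.coeff_smul, MvPolynomial.coeff_prod_X_pow, smul_eq_mul]
  rw [Finset.sum_eq_single (m : ι → ℕ)]
  · rw [if_pos (by ext; simp), mul_one]
  · intro k _ hkm
    rw [if_neg (fun h ↦ hkm (by ext; simp [h])), mul_zero]
  · intro hm
    obtain ⟨c, hc⟩ : ∃ c, (q c).natDegree < m c := by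
      simpa [Fintype.mem_piFinset] using hm
    rw [Finset.prod_eq_zero (Finset.mem_univ c) (coeff_eq_zero_of_natDegree_lt hc), zero_mul]

end Coeff

section Connected

variable {α : Type*} {r : α → α → Prop}

/-- Connectedness of the restriction of `r` to `B`; the empty set counts as connected. -/
def IsConnectedOn (r : α → α → Prop) (B : Set α) : Prop :=
  ∀ x ∈ B, ∀ y ∈ B, Relation.ReflTransGen (fun a b ↦ a ∈ B ∧ b ∈ B ∧ (r a b ∨ r b a)) x y

open scoped Classical in
/-- If `r` relates no point of `A` to a point of `B \ A`, its restriction to `B` is the disjoint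
sum of its restrictions to these two parts. -/
noncomputable def sumSubrelRelIso {A B : Set α} (hAB : A ⊆ B)
    (h : ∀ x ∈ A, ∀ y ∈ B \ A, ¬ r x y ∧ ¬ r y x) :
    Sum.LiftRel (Subrel r (· ∈ A)) (Subrel r (· ∈ B \ A)) ≃r Subrel r (· ∈ B) where
  toEquiv := Equiv.Set.sumDiffSubset hAB
  map_rel_iff' := by
    rintro (⟨x, hx⟩ | ⟨x, hx⟩) (⟨y, hy⟩ | ⟨y, hy⟩)
    · simp
    · simpa using (h x hx y hy).1
    · simpa using (h y hy x hx).2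
    · simp

end Connected

section Ehrhart

variable {R α' α β ι : Type*} {s : α' → α' → Prop} {r : α → α → Prop}

/-- `p` is the strict Ehrhart polynomial `ehr^str` of `r`. -/
def IsStrictEhrhart [CommSemiring R] (r : α → α → Prop) (p : R[X]) : Prop :=
  ∀ k : ℕ, p.eval (k : R) = Nat.card (StrictMap r (Fin k))

namespace IsStrictEhrhart

section Semiring

variable [CommSemiring R] {p q : R[X]}

theorem eval_card [LinearOrder β] [Finite β] (hp : IsStrictEhrhart r p) :
    p.eval (Nat.card β : R) = Nat.card (StrictMap r β) := by
  have := Fintype.ofFinite β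
  rw [hp, Nat.card_congr (StrictMap.congr (.refl r)
    (Fintype.orderIsoFinOfCardEq β Nat.card_eq_fintype_card.symm))]

theorem eval_zero [Nonempty α] (hp : IsStrictEhrhart r p) : p.eval 0 = 0 := by
  simpa using hp 0

theorem of_relIso (e : r ≃r s) (hp : IsStrictEhrhart r p) : IsStrictEhrhart s p := fun k ↦ by
  rw [hp, Nat.card_congr (StrictMap.congr e (.refl _))]

theorem mul (hp : IsStrictEhrhart r p) (hq : IsStrictEhrhart s q) :
    IsStrictEhrhart (Sum.LiftRel r s) (p * q) := fun k ↦ by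
  rw [eval_mul, hp, hq, Nat.card_congr StrictMap.sumEquiv, Nat.card_prod, Nat.cast_mul]

end Semiring

section Domain

variable [CommRing R] [IsDomain R] [CharZero R] {p q : R[X]}

theorem unique (hp : IsStrictEhrhart r p) (hq : IsStrictEhrhart r q) : p = q :=
  eq_of_infinite_eval_eq p q <|
    (Set.infinite_range_of_injective (Nat.cast_injective (R := R))).mono <| by
      rintro _ ⟨k, rfl⟩
      exact (hp k).trans (hq k).symm

theorem eq_one [IsEmpty α] (hp : IsStrictEhrhart r p) : p = 1 :=
  hp.unique fun k ↦ by simp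

theorem coeff_one_eq_zero_of_sum [Nonempty α] [Nonempty α'] {t : R[X]}
    (ht : IsStrictEhrhart (Sum.LiftRel r s) t) (hp : IsStrictEhrhart r p)
    (hq : IsStrictEhrhart s q) : t.coeff 1 = 0 := by
  rw [ht.unique (hp.mul hq), mul_coeff_one, coeff_zero_eq_eval_zero, coeff_zero_eq_eval_zero,
    hp.eval_zero, hq.eval_zero, zero_mul, mul_zero, add_zero]

theorem aeval_sum_X [Finite α] [Fintype ι] [LinearOrder ι] {E : Set α → R[X]}
    (hp : IsStrictEhrhart r p) (hE : ∀ B, IsStrictEhrhart (Subrel r (· ∈ B)) (E B)) :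
    aeval (∑ c : ι, MvPolynomial.X c : MvPolynomial ι R) p =
      ∑ f : IsotoneMap r ι, ∏ c, aeval (MvPolynomial.X c : MvPolynomial ι R) (E (f ⁻¹' {c})) := by
  refine MvPolynomial.funext_set (fun _ ↦ Set.range ((↑) : ℕ → R))
    (fun _ ↦ Set.infinite_range_of_injective Nat.cast_injective) fun x hx ↦ ?_
  choose m hm using fun c ↦ hx c trivial
  obtain rfl : (fun c ↦ (m c : R)) = x := funext hm
  have fst_mono : Monotone fun z : Σₗ c, Fin (m c) ↦ z.1 := fun y z hyz ↦
    (Sigma.Lex.le_def.1 hyz).elim le_of_lt fun h ↦ h.1.le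
  have card_fibre (c : ι) : Nat.card ((fun z : Σₗ c, Fin (m c) ↦ z.1) ⁻¹' {c}) = m c :=
    (Nat.card_congr (Equiv.sigmaSubtype c)).trans (Nat.card_fin _)
  have card_total : Nat.card (Σₗ c, Fin (m c)) = ∑ c, m c :=
    Nat.card_sigma.trans (by simp)
  rw [mvPolynomial_eval_aeval]
  simp only [map_sum, map_prod, mvPolynomial_eval_aeval, MvPolynomial.eval_X]
  calc p.eval (∑ c, (m c : R))
      = Nat.card (StrictMap r (Σₗ c, Fin (m c))) := by
        rw [← Nat.cast_sum, ← card_total, hp.eval_card]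
    _ = _ := by
        rw [card_strictMap_eq_sum_prod r fst_mono, Nat.cast_sum]
        refine Finset.sum_congr rfl fun f _ ↦ ?_
        rw [Nat.cast_prod]
        refine Finset.prod_congr rfl fun c _ ↦ ?_
        rw [← (hE _).eval_card, card_fibre]

theorem coeff_card_mul_factorial [Finite α] [Fintype ι] [LinearOrder ι] {E : Set α → R[X]}
    (hp : IsStrictEhrhart r p) (hE : ∀ B, IsStrictEhrhart (Subrel r (· ∈ B)) (E B)) :
    p.coeff (Fintype.card ι) * (Fintype.card ι).factorial =
      ∑ f : IsotoneMap r ι, ∏ c, (E (f ⁻¹' {c})).coeff 1 := by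
  let m : ι →₀ ℕ := Finsupp.equivFunOnFinite.symm fun _ ↦ 1
  have degree_m : m.degree = Fintype.card ι := by simp [m, Finsupp.degree_eq_sum]
  have multinomial_m : m.multinomial = (Fintype.card ι).factorial := by
    rw [Finsupp.multinomial, Finsupp.sum_fintype _ _ fun _ ↦ rfl,
      Finsupp.prod_fintype _ _ fun _ ↦ Nat.factorial_zero]
    simp [m]
  rw [← multinomial_m, ← degree_m, ← coeff_aeval_sum_X, hp.aeval_sum_X hE, MvPolynomial.coeff_sum]
  exact Finset.sum_congr rfl fun f _ ↦ coeff_prod_aeval_X _ m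

theorem isConnectedOn_of_coeff_one_ne_zero {E : Set α → R[X]}
    (hE : ∀ B, IsStrictEhrhart (Subrel r (· ∈ B)) (E B)) {B : Set α} (hB : (E B).coeff 1 ≠ 0) :
    IsConnectedOn r B := by
  intro x hx y hy
  by_contra hxy
  let A : Set α := {z ∈ B | Relation.ReflTransGen (fun a b ↦ a ∈ B ∧ b ∈ B ∧ (r a b ∨ r b a)) x z}
  have no_cross : ∀ a ∈ A, ∀ b ∈ B \ A, ¬ r a b ∧ ¬ r b a := fun a ha b hb ↦
    ⟨fun hab ↦ hb.2 ⟨hb.1, ha.2.tail ⟨ha.1, hb.1, .inl hab⟩⟩,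
      fun hba ↦ hb.2 ⟨hb.1, ha.2.tail ⟨ha.1, hb.1, .inr hba⟩⟩⟩
  have : Nonempty A := ⟨x, hx, .refl⟩
  have : Nonempty ↥(B \ A) := ⟨y, hy, fun hyA ↦ hxy hyA.2⟩
  exact hB <| coeff_one_eq_zero_of_sum
    ((hE B).of_relIso (sumSubrelRelIso (Set.sep_subset B _) no_cross).symm) (hE A) (hE (B \ A))

end Domain

end IsStrictEhrhart

end Ehrhart

section Kernel

open scoped Function

variable {α ι M : Type*}

theorem surjective_iff_card_quot_ker [Finite ι] {f : α → ι} :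
    Function.Surjective f ↔ Nat.card (Quot (Eq on f)) = Nat.card ι := by
  refine ⟨fun hf ↦ Nat.card_congr (Setoid.quotientKerEquivOfSurjective f hf), fun h ↦ ?_⟩
  exact ((Setoid.kerLift_injective f).bijective_of_nat_card_le h.ge).2.comp Quotient.mk_surjective

theorem finprod_quot_ker_preimage [CommMonoid M] [Fintype ι] {f : α → ι}
    (hf : Function.Surjective f) (w : Set α → M) :
    ∏ᶠ C, w (Quot.mk (Eq on f) ⁻¹' {C}) = ∏ c, w (f ⁻¹' {c}) := by
  rw [← finprod_eq_prod_of_fintype]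
  refine finprod_eq_of_bijective _ (Setoid.quotientKerEquivOfSurjective f hf).bijective ?_
  rintro ⟨x⟩
  congr 1
  ext y
  exact Quotient.eq (r := Setoid.ker f)

theorem prod_preimage_eq_ite [CommMonoidWithZero M] [Fintype ι] (f : α → ι)
    {w : Set α → M} (hw : w ∅ = 0) :
    ∏ c, w (f ⁻¹' {c}) = if Nat.card (Quot (Eq on f)) = Nat.card ι then
      ∏ᶠ C, w (Quot.mk (Eq on f) ⁻¹' {C}) else 0 := by
  split_ifs with h <;> rw [← surjective_iff_card_quot_ker] at h
  · rw [finprod_quot_ker_preimage h]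
  · obtain ⟨c, hc⟩ := not_forall.1 h
    refine Finset.prod_eq_zero (Finset.mem_univ c) ?_
    rwa [Set.preimage_singleton_eq_empty.2 hc]

end Kernel

section Compatible

open scoped Function

variable {n : ℕ} {le r : Fin n → Fin n → Prop} {ι M : Type*}

theorem quotLe.apply_le [Preorder ι] {i j : Fin n} (h : quotLe le r i j)
    (f : IsotoneMap le ι) (hr : ∀ a b, r a b → f a = f b) : f i ≤ f j := by
  induction h with
  | refl => rfl
  | tail _ hbc ih => exact ih.trans (hbc.elim f.map_rel fun hbc ↦ (hr _ _ hbc).le)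

theorem compat_ker [PartialOrder ι] (f : IsotoneMap le ι)
    (hf : ∀ c, IsConnectedOn le (f ⁻¹' {c})) : Compat le (Eq on f) :=
  ⟨fun x y hxy ↦ hf (f x) x rfl y hxy.symm, fun _ _ hij hji ↦
    (hij.apply_le f fun _ _ ↦ id).antisymm (hji.apply_le f fun _ _ ↦ id)⟩

theorem Compat.quotLe_and_quotLe_iff (hr : Equivalence r) (hc : Compat le r) {i j : Fin n} :
    quotLe le r i j ∧ quotLe le r j i ↔ r i j :=
  ⟨fun h ↦ hc.2 i j h.1 h.2, fun h ↦ ⟨.single (.inr h), .single (.inr (hr.symm h))⟩⟩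

theorem Compat.heapCount_quotLe (hr : Equivalence r) (hc : Compat le r) :
    heapCount (quotLe le r) =
      Nat.card {f : IsotoneMap le (Fin (clRel r)) // (Eq on f) = r} := by
  have cl_quot : clQP (quotLe le r) = clRel r := by
    simp only [clQP, hc.quotLe_and_quotLe_iff hr]
  rw [heapCount, cl_quot]
  simp only [hc.quotLe_and_quotLe_iff hr]
  exact Nat.card_congr
    { toFun f := ⟨⟨f.1, fun hij ↦ f.2.1 _ _ (.single (.inl hij))⟩,
        funext₂ fun i j ↦ propext (f.2.2 i j)⟩
      invFun f := ⟨f.1, fun i j hij ↦ hij.apply_le f.1 fun a b hab ↦ (congrFun₂ f.2 a b).mpr hab,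
        fun i j ↦ iff_of_eq (congrFun₂ f.2 i j)⟩ }

open scoped Classical in
theorem sum_eq_sum_compat [AddCommMonoid M] [Finite ι] [LE ι]
    {w : IsotoneMap le ι → M} (hw : ∀ f : IsotoneMap le ι, w f ≠ 0 → Compat le (Eq on f)) :
    ∑ f, w f = ∑ r : {r : Fin n → Fin n → Prop // Equivalence r ∧ Compat le r},
      ∑ f ∈ {f : IsotoneMap le ι | (Eq on f) = r.1}, w f := by
  simp only [Finset.sum_filter]
  rw [Finset.sum_comm]
  refine Finset.sum_congr rfl fun f _ ↦ ?_
  by_cases hf : w f = 0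
  · simp [hf]
  · rw [Fintype.sum_eq_single ⟨Eq on f, eq_equivalence.comap f, hw f hf⟩
      fun r hr ↦ if_neg fun h ↦ hr (Subtype.ext h.symm), if_pos rfl]

open scoped Classical in
theorem Compat.sum_prod_preimage [CommSemiring M] (hr : Equivalence r) (hc : Compat le r)
    {w : Set (Fin n) → M} (hw : w ∅ = 0) (d : ℕ) :
    ∑ f ∈ {f : IsotoneMap le (Fin d) | (Eq on f) = r}, ∏ c, w (f ⁻¹' {c}) =
      if clRel r = d then heapCount (quotLe le r) * ∏ᶠ C, w (Quot.mk r ⁻¹' {C}) else 0 := by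
  have term_eq (f : IsotoneMap le (Fin d)) (hf : (Eq on f) = r) :
      ∏ c, w (f ⁻¹' {c}) = if clRel r = d then ∏ᶠ C, w (Quot.mk r ⁻¹' {C}) else 0 := by
    rw [← hf, prod_preimage_eq_ite f hw, Nat.card_fin, clRel]
  rw [Finset.sum_congr rfl fun f hf ↦ term_eq f (Finset.mem_filter.1 hf).2, Finset.sum_const]
  split_ifs with hd
  · subst hd
    rw [hc.heapCount_quotLe hr, Nat.card_eq_fintype_card, Fintype.card_subtype, nsmul_eq_mul]
  · rw [smul_zero]

open scoped Classical in
theorem IsStrictEhrhart.coeff_mul_factorial_eq_sum_compat [CommRing M] [IsDomain M] [CharZero M]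
    {p : M[X]} {E : Set (Fin n) → M[X]} (hp : IsStrictEhrhart le p)
    (hE : ∀ B, IsStrictEhrhart (Subrel le (· ∈ B)) (E B)) (d : ℕ) :
    p.coeff d * d.factorial = ∑ r : {r : Fin n → Fin n → Prop // Equivalence r ∧ Compat le r},
      if clRel r.1 = d then
        heapCount (quotLe le r.1) * ∏ᶠ C, (E (Quot.mk r.1 ⁻¹' {C})).coeff 1 else 0 := by
  have coeff_one_empty : (E ∅).coeff 1 = 0 := by
    rw [(hE ∅).eq_one, coeff_one, if_neg one_ne_zero]
  have compat_of_ne_zero (f : IsotoneMap le (Fin d))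
      (hf : ∏ c, (E (f ⁻¹' {c})).coeff 1 ≠ 0) : Compat le (Eq on f) :=
    compat_ker f fun c ↦ isConnectedOn_of_coeff_one_ne_zero hE
      (Finset.prod_ne_zero_iff.1 hf c (Finset.mem_univ c))
  calc p.coeff d * d.factorial
      = ∑ f : IsotoneMap le (Fin d), ∏ c, (E (f ⁻¹' {c})).coeff 1 := by
        simpa only [Fintype.card_fin] using hp.coeff_card_mul_factorial (ι := Fin d) hE
    _ = _ := (sum_eq_sum_compat compat_of_ne_zero).trans <| Finset.sum_congr rfl fun r _ ↦
        r.2.2.sum_prod_preimage r.2.1 (w := fun B ↦ (E B).coeff 1) coeff_one_empty d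

end Compatible

theorem ehr_str_eq_sum_over_compat_general {K : Type*} [Field K] [CharZero K] {n : ℕ}
    (le : Fin n → Fin n → Prop)
    (p : K[X]) (hp : ∀ k : ℕ, p.eval (k : K) = LstrCount le k)
    (E : Set (Fin n) → K[X])
    (hE : ∀ (B : Set (Fin n)) (k : ℕ), (E B).eval (k : K) = LstrCountOn le B k) :
    p = ∑ᶠ r : {r : Fin n → Fin n → Prop // Equivalence r ∧ Compat le r},
      C ((heapCount (quotLe le r.1) : K) / (Nat.factorial (clRel r.1)) *
          ∏ᶠ c : Quot r.1, (derivative (E {x | Quot.mk r.1 x = c})).eval 0) *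
        X ^ (clRel r.1) := by
  classical
  have p_ehr : IsStrictEhrhart le p := hp
  have E_ehr (B : Set (Fin n)) : IsStrictEhrhart (Subrel le (· ∈ B)) (E B) := hE B
  ext d
  have d_factorial_ne_zero : (d.factorial : K) ≠ 0 := Nat.cast_ne_zero.2 d.factorial_ne_zero
  rw [eq_div_of_mul_eq d_factorial_ne_zero (p_ehr.coeff_mul_factorial_eq_sum_compat E_ehr d),
    finsum_eq_sum_of_fintype, finsetSum_coeff, Finset.sum_div]
  refine Finset.sum_congr rfl fun r _ ↦ ?_
  simp only [eval_zero_derivative, coeff_C_mul_X_pow, eq_comm (a := d)]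
  split_ifs with h
  · rw [h, div_mul_eq_mul_div]
    rfl
  · rw [zero_div]

/-- `ehr^str_P(X) = Σ_{~ ◁ P} (μ_{P/~} / cl(~)!) · (Π_C (ehr^str_{P|C})'(0)) · X^{cl(~)}`. -/
theorem ehr_str_eq_sum_over_compat {n : ℕ} (le : Fin n → Fin n → Prop)
    (hrefl : ∀ i, le i i)
    (htrans : ∀ i j k, le i j → le j k → le i k)
    (p : ℚ[X]) (hp : ∀ k : ℕ, p.eval (k : ℚ) = LstrCount le k)
    (E : Set (Fin n) → ℚ[X])
    (hE : ∀ (B : Set (Fin n)) (k : ℕ), (E B).eval (k : ℚ) = LstrCountOn le B k) :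
    p = ∑ᶠ r : {r : Fin n → Fin n → Prop // Equivalence r ∧ Compat le r},
      Polynomial.C ((heapCount (quotLe le r.1) : ℚ) / (Nat.factorial (clRel r.1)) *
          ∏ᶠ c : Quot r.1,
            (Polynomial.derivative (E {x | Quot.mk r.1 x = c})).eval 0) *
        Polynomial.X ^ (clRel r.1) :=
  ehr_str_eq_sum_over_compat_general le p hp E hE
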